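/- Let a ∈ (0, 1/2) and let Π be the marginal DL density Π(x) = (1/(2^{(1+a)/2} Γ(a))) |x|^{(a−1)/2} K_{1−a}(√(2|x|)). For S ⊂ {1,…,n} and η ∈ ℝ^{|S|} with ‖η‖₂ ≤ m for m large, the product density satisfies −log Π_S(η) ≤ C { |S| log(1/a) + |S|^{3/4} m^{1/2} } for an absolute constant C > 0. -/

import Mathlib

open Real MeasureTheory Set Finset

/-- Modified Bessel function of the second kind, via the integral representation
`K_ν(x) = Γ(ν+1/2)(2x)^ν/√π ∫_0^∞ cos t/(t²+x²)^{ν+1/2} dt`. -/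
noncomputable def besselK (ν x : ℝ) : ℝ :=
  Real.Gamma (ν + 1/2) * (2*x) ^ ν / Real.sqrt π *
    ∫ t in Set.Ioi (0:ℝ), Real.cos t / (t^2 + x^2) ^ (ν + 1/2)

/-- Marginal Dirichlet–Laplace density with parameter `a`. -/
noncomputable def dlDensity (a θ : ℝ) : ℝ :=
  (1 / (2 ^ ((1+a)/2) * Real.Gamma a)) * |θ| ^ ((a-1)/2) *
    besselK (1-a) (Real.sqrt (2*|θ|))

/-!
The integrand defining `K_ν(z)` oscillates, so no lower bound can be read off it. Writing
`(t² + z²)^{-ν-1/2}` as a Gamma integral and taking the cosine transform of the resulting Gaussian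
turns it into `K_ν(z) = ½ ∫_0^∞ u^{ν-1} exp(-(z/2)(u + 1/u)) du`, whose integrand is positive;
the range `1 < u ≤ 2` alone gives `K_ν(z) ≥ e^{-5z/4} / 4`. With `Γ(a) ≤ 1/a` this yields
`Π(x) ≥ (a/8) exp(-3 √|x|)` for every `x ≠ 0` and `a ∈ (0, 1)`; the constant `log 8` is absorbed
in `log (1/a)` once `a < 1/2`, and `∑ √|η_j|` is bounded by the power mean inequality.
-/

theorem integral_cos_mul_exp_neg_mul_sq_Ioi {b : ℝ} (hb : 0 < b) (w : ℝ) :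
    ∫ t in Ioi (0 : ℝ), cos (w * t) * exp (-b * t ^ 2) =
      √(π / b) / 2 * exp (-w ^ 2 / (4 * b)) := by
  have hint : Integrable fun t : ℝ =>
      Complex.exp (Complex.I * w * t) * Complex.exp (-(b : ℂ) * t ^ 2) := by
    refine (integrable_cexp_neg_mul_sq (b := (b : ℂ)) (by simpa using hb)).bdd_mul (c := 1)
      (by fun_prop) (.of_forall fun t => ?_)
    rw [mul_assoc, mul_comm, ← Complex.ofReal_mul, Complex.norm_exp_ofReal_mul_I]
  have hre (t : ℝ) :
      (Complex.exp (Complex.I * w * t) * Complex.exp (-(b : ℂ) * t ^ 2)).re =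
        cos (w * |t|) * exp (-b * |t| ^ 2) := by
    have hgauss : Complex.exp (-(b : ℂ) * t ^ 2) = (exp (-b * t ^ 2) : ℝ) := by push_cast; rfl
    have hcos : cos (w * |t|) = cos (w * t) := by
      rw [← cos_abs (w * |t|), ← cos_abs (w * t), abs_mul, abs_abs, abs_mul]
    rw [hgauss, hcos, sq_abs, Complex.re_mul_ofReal, mul_assoc, mul_comm Complex.I,
      ← Complex.ofReal_mul, Complex.exp_ofReal_mul_I_re]
  have hvalue : (π / b : ℂ) ^ (1 / 2 : ℂ) * Complex.exp (-(w : ℂ) ^ 2 / (4 * b)) =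
      (√(π / b) * exp (-w ^ 2 / (4 * b)) : ℝ) := by
    rw [sqrt_eq_rpow, Complex.ofReal_mul, Complex.ofReal_cpow (by positivity)]
    push_cast
    rfl
  have hfourier := congrArg Complex.re
    (fourierIntegral_gaussian (b := (b : ℂ)) (by simpa using hb) w)
  rw [hvalue, Complex.ofReal_re, ← Complex.reCLM_apply,
    ← ContinuousLinearMap.integral_comp_comm _ hint] at hfourier
  simp_rw [Complex.reCLM_apply, hre] at hfourier
  rw [integral_comp_abs (f := fun t => cos (w * t) * exp (-b * t ^ 2))] at hfourier
  linarith

theorem integrable_rpow_mul_exp_neg_sq_add_mul {p c : ℝ} (hp : 1 / 2 < p) (hc : 0 < c) :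
    Integrable (fun q : ℝ × ℝ => q.2 ^ (p - 1) * exp (-((q.1 ^ 2 + c) * q.2)))
      ((volume.restrict (Ioi 0)).prod (volume.restrict (Ioi 0))) := by
  have hsplit (t s : ℝ) : s ^ (p - 1) * exp (-((t ^ 2 + c) * s)) =
      s ^ (p - 1) * exp (-c * s) * exp (-s * t ^ 2) := by
    rw [mul_assoc, ← exp_add]
    ring_nf
  rw [integrable_prod_iff' (Measurable.aestronglyMeasurable (by fun_prop))]
  constructor
  · filter_upwards [ae_restrict_mem measurableSet_Ioi] with s hs
    simp_rw [hsplit]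
    exact (integrable_exp_neg_mul_sq hs).integrableOn.const_mul _
  · have hgamma : IntegrableOn (fun s : ℝ => s ^ (p - 3 / 2) * exp (-c * s ^ (1 : ℝ)) * (√π / 2))
        (Ioi 0) :=
      (integrableOn_rpow_mul_exp_neg_mul_rpow (by linarith) one_pos hc).mul_const _
    refine hgamma.congr_fun (fun s (hs : 0 < s) => ?_) measurableSet_Ioi
    have hnorm (t : ℝ) : ‖s ^ (p - 1) * exp (-((t ^ 2 + c) * s))‖ =
        s ^ (p - 1) * exp (-c * s) * exp (-s * t ^ 2) := by
      rw [norm_of_nonneg (by positivity), hsplit]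
    simp_rw [hnorm]
    rw [integral_const_mul, integral_gaussian_Ioi, rpow_one, sqrt_div pi_pos.le,
      show p - 3 / 2 = p - 1 - 1 / 2 by ring, rpow_sub hs (p - 1), ← sqrt_eq_rpow]
    ring

theorem Gamma_mul_integral_cos_div_sq_add_rpow {p c : ℝ} (hp : 1 / 2 < p) (hc : 0 < c) :
    Gamma p * ∫ t in Ioi (0 : ℝ), cos t / (t ^ 2 + c) ^ p =
      √π / 2 * ∫ s in Ioi (0 : ℝ), s ^ (p - 3 / 2) * exp (-(c * s + 1 / (4 * s))) := by
  have hint : Integrable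
      (Function.uncurry fun t s : ℝ => cos t * (s ^ (p - 1) * exp (-((t ^ 2 + c) * s))))
      ((volume.restrict (Ioi 0)).prod (volume.restrict (Ioi 0))) :=
    (integrable_rpow_mul_exp_neg_sq_add_mul hp hc).bdd_mul (c := 1)
      (Measurable.aestronglyMeasurable (by fun_prop)) (.of_forall fun q => abs_cos_le_one q.1)
  have hgamma (t : ℝ) : Gamma p * (cos t / (t ^ 2 + c) ^ p) =
      ∫ s in Ioi (0 : ℝ), cos t * (s ^ (p - 1) * exp (-((t ^ 2 + c) * s))) := by
    have hr : 0 < t ^ 2 + c := by positivity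
    rw [integral_const_mul, integral_rpow_mul_exp_neg_mul_Ioi (by linarith) hr, one_div,
      inv_rpow hr.le]
    ring
  have hcos : ∀ s ∈ Ioi (0 : ℝ),
      ∫ t in Ioi (0 : ℝ), cos t * (s ^ (p - 1) * exp (-((t ^ 2 + c) * s))) =
        √π / 2 * (s ^ (p - 3 / 2) * exp (-(c * s + 1 / (4 * s)))) := by
    intro s (hs : 0 < s)
    have hsplit (t : ℝ) : cos t * (s ^ (p - 1) * exp (-((t ^ 2 + c) * s))) =
        s ^ (p - 1) * exp (-(c * s)) * (cos (1 * t) * exp (-s * t ^ 2)) := by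
      rw [show -((t ^ 2 + c) * s) = -(c * s) + -s * t ^ 2 by ring, exp_add, one_mul]
      ring
    simp_rw [hsplit]
    rw [integral_const_mul, integral_cos_mul_exp_neg_mul_sq_Ioi hs, sqrt_div pi_pos.le,
      show p - 3 / 2 = p - 1 - 1 / 2 by ring, rpow_sub hs (p - 1), ← sqrt_eq_rpow,
      neg_add, exp_add, one_pow, neg_div]
    ring
  rw [← integral_const_mul, ← integral_const_mul, ← setIntegral_congr_fun measurableSet_Ioi hcos,
    ← integral_integral_swap hint]
  simp_rw [hgamma]

theorem integrableOn_rpow_mul_exp_neg_mul_add_inv {ν z : ℝ} (hν : 0 < ν) (hz : 0 < z) :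
    IntegrableOn (fun u : ℝ => u ^ (ν - 1) * exp (-(z / 2 * (u + 1 / u)))) (Ioi 0) := by
  have hgamma : IntegrableOn (fun u : ℝ => u ^ (ν - 1) * exp (-(z / 2) * u ^ (1 : ℝ))) (Ioi 0) :=
    integrableOn_rpow_mul_exp_neg_mul_rpow (by linarith) one_pos (by positivity)
  refine Integrable.mono' hgamma (Measurable.aestronglyMeasurable (by fun_prop)) ?_
  filter_upwards [ae_restrict_mem measurableSet_Ioi] with u (hu : 0 < u)
  rw [norm_of_nonneg (by positivity), rpow_one, neg_mul]
  gcongr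
  simpa using hu.le

theorem besselK_eq_integral_rpow_mul_exp {ν z : ℝ} (hν : 0 < ν) (hz : 0 < z) :
    besselK ν z = 1 / 2 * ∫ u in Ioi (0 : ℝ), u ^ (ν - 1) * exp (-(z / 2 * (u + 1 / u))) := by
  have hscale : ∀ s ∈ Ioi (0 : ℝ),
      (2 * z * s) ^ (ν - 1) * exp (-(z / 2 * (2 * z * s + 1 / (2 * z * s)))) =
        (2 * z) ^ (ν - 1) * (s ^ (ν + 1 / 2 - 3 / 2) * exp (-(z ^ 2 * s + 1 / (4 * s)))) := by
    intro s (hs : 0 < s)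
    rw [mul_rpow (by positivity) hs.le, mul_assoc, show ν + 1 / 2 - 3 / 2 = ν - 1 by ring]
    congr 4
    field_simp
    ring
  have hsubst : (2 * z) ^ ν *
      ∫ s in Ioi (0 : ℝ), s ^ (ν + 1 / 2 - 3 / 2) * exp (-(z ^ 2 * s + 1 / (4 * s))) =
        ∫ u in Ioi (0 : ℝ), u ^ (ν - 1) * exp (-(z / 2 * (u + 1 / u))) := by
    have hcomp := integral_comp_mul_left_Ioi
      (fun u : ℝ => u ^ (ν - 1) * exp (-(z / 2 * (u + 1 / u)))) 0 (b := 2 * z) (by positivity)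
    rwa [setIntegral_congr_fun measurableSet_Ioi hscale, integral_const_mul, mul_zero, smul_eq_mul,
      eq_inv_mul_iff_mul_eq₀ (by positivity), ← mul_assoc, ← rpow_one_add' (by positivity)
        (by linarith), add_sub_cancel] at hcomp
  rw [← hsubst, besselK, div_mul_eq_mul_div, mul_right_comm,
    Gamma_mul_integral_cos_div_sq_add_rpow (by linarith) (by positivity),
    div_eq_iff (by positivity)]
  ring

theorem exp_neg_div_four_le_besselK {ν z : ℝ} (hν : 0 < ν) (hz : 0 < z) :
    exp (-(5 / 4 * z)) / 4 ≤ besselK ν z := by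
  have hint := integrableOn_rpow_mul_exp_neg_mul_add_inv hν hz
  have hpoint : ∀ u ∈ Ioc (1 : ℝ) 2,
      exp (-(5 / 4 * z)) / 2 ≤ u ^ (ν - 1) * exp (-(z / 2 * (u + 1 / u))) := by
    rintro u ⟨hu1, hu2⟩
    have hu : 0 < u := by linarith
    have hpow : 1 / 2 ≤ u ^ (ν - 1) := calc
      1 / 2 ≤ u⁻¹ := by rw [one_div]; gcongr
      _ = u ^ (-1 : ℝ) := (rpow_neg_one u).symm
      _ ≤ u ^ (ν - 1) := rpow_le_rpow_of_exponent_le hu1.le (by linarith)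
    have hsum : u + 1 / u ≤ 5 / 2 := by
      rw [← sub_nonneg, show 5 / 2 - (u + 1 / u) = (2 - u) * (u - 1 / 2) / u by field_simp; ring]
      exact div_nonneg (mul_nonneg (by linarith) (by linarith)) hu.le
    calc exp (-(5 / 4 * z)) / 2 = 1 / 2 * exp (-(z / 2 * (5 / 2))) := by ring_nf
      _ ≤ u ^ (ν - 1) * exp (-(z / 2 * (u + 1 / u))) := by gcongr
  have hsub : Ioc (1 : ℝ) 2 ⊆ Ioi 0 := fun u hu => one_pos.trans hu.1
  have hIoc := setIntegral_ge_of_const_le_real measurableSet_Ioc (by simp) hpoint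
    (hint.mono_set hsub)
  have hIoi := setIntegral_mono_set hint
    ((ae_restrict_mem measurableSet_Ioi).mono fun u (hu : 0 < u) => by
      simp only [Pi.zero_apply]; positivity) hsub.eventuallyLE
  rw [volume_real_Ioc_of_le one_le_two] at hIoc
  rw [besselK_eq_integral_rpow_mul_exp hν hz]
  linarith

theorem Gamma_le_one_div {a : ℝ} (ha : 0 < a) (ha1 : a ≤ 1) : Gamma a ≤ 1 / a := by
  have hconv := convexOn_Gamma.2 (mem_Ioi.mpr one_pos) (mem_Ioi.mpr two_pos)
    (sub_nonneg.mpr ha1) ha.le (sub_add_cancel 1 a)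
  simp only [smul_eq_mul, Gamma_one, Gamma_two] at hconv
  rw [show (1 - a) * 1 + a * 2 = a + 1 by ring, Gamma_add_one ha.ne'] at hconv
  rw [le_div_iff₀ ha]
  linarith

theorem exp_neg_sqrt_le_abs_rpow {a x : ℝ} (ha : 0 ≤ a) (ha1 : a ≤ 1) (hx : x ≠ 0) :
    exp (-√|x|) ≤ |x| ^ ((a - 1) / 2) := by
  have hr : 0 < √|x| := sqrt_pos.mpr (abs_pos.mpr hx)
  have hlog : log |x| = 2 * log √|x| := by rw [log_sqrt (abs_nonneg x)]; ring
  rw [rpow_def_of_pos (abs_pos.mpr hx), exp_le_exp, hlog]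
  nlinarith [log_le_self hr.le]

theorem mul_exp_neg_sqrt_le_dlDensity {a x : ℝ} (ha : 0 < a) (ha1 : a < 1) (hx : x ≠ 0) :
    a / 8 * exp (-(3 * √|x|)) ≤ dlDensity a x := by
  have hr : 0 < √|x| := sqrt_pos.mpr (abs_pos.mpr hx)
  have hz : √(2 * |x|) = √2 * √|x| := sqrt_mul zero_le_two _
  have hprefactor : a / 2 ≤ 1 / (2 ^ ((1 + a) / 2) * Gamma a) := by
    have hpow : (2 : ℝ) ^ ((1 + a) / 2) ≤ 2 :=
      rpow_le_self_of_one_le one_le_two (by linarith)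
    calc a / 2 = 1 / (2 * (1 / a)) := by field_simp
      _ ≤ 1 / (2 ^ ((1 + a) / 2) * Gamma a) := by
        gcongr
        exact Gamma_le_one_div ha ha1.le
  have hbessel : exp (-(2 * √|x|)) / 4 ≤ besselK (1 - a) √(2 * |x|) := by
    have hsqrt : √2 ≤ 8 / 5 := by rw [sqrt_le_left (by norm_num)]; norm_num
    have hexp : 5 / 4 * √(2 * |x|) ≤ 2 * √|x| := by rw [hz]; nlinarith
    grw [← exp_neg_div_four_le_besselK (by linarith) (by rw [hz]; positivity), hexp]
  calc a / 8 * exp (-(3 * √|x|))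
      = a / 2 * exp (-√|x|) * (exp (-(2 * √|x|)) / 4) := by
        rw [show -(3 * √|x|) = -√|x| + -(2 * √|x|) by ring, exp_add]; ring
    _ ≤ dlDensity a x := by
        unfold dlDensity
        gcongr
        exact exp_neg_sqrt_le_abs_rpow ha.le ha1.le hx

theorem dlDensity_pos {a x : ℝ} (ha : 0 < a) (ha1 : a < 1) (hx : x ≠ 0) : 0 < dlDensity a x :=
  (by positivity : 0 < a / 8 * exp (-(3 * √|x|))).trans_le (mul_exp_neg_sqrt_le_dlDensity ha ha1 hx)

theorem neg_log_dlDensity_le {a x : ℝ} (ha : 0 < a) (ha1 : a < 1) (hx : x ≠ 0) :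
    -log (dlDensity a x) ≤ log (8 / a) + 3 * √|x| := by
  have hlog := log_le_log (by positivity) (mul_exp_neg_sqrt_le_dlDensity ha ha1 hx)
  rw [log_mul (by positivity) (by positivity), log_exp, ← inv_div, log_inv] at hlog
  linarith

-- A junk value: the density of the paper tends to `∞` at `0` for `a < 1`.
theorem dlDensity_zero {a : ℝ} (ha : a ≠ 1) : dlDensity a 0 = 0 := by
  rw [dlDensity, abs_zero, zero_rpow (div_ne_zero (sub_ne_zero.mpr ha) two_ne_zero), mul_zero,
    zero_mul]

theorem sum_sqrt_abs_le {ι : Type*} (s : Finset ι) (x : ι → ℝ) :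
    ∑ i ∈ s, √|x i| ≤ (#s : ℝ) ^ (3 / 4 : ℝ) * √(∑ i ∈ s, x i ^ 2) ^ (1 / 2 : ℝ) := by
  have hpow : (∑ i ∈ s, √|x i|) ^ 4 ≤ (#s : ℝ) ^ 3 * ∑ i ∈ s, x i ^ 2 := by
    have hfourth (i : ι) : √|x i| ^ 4 = x i ^ 2 := by
      rw [show 4 = 2 * 2 from rfl, pow_mul, sq_sqrt (abs_nonneg _), sq_abs]
    simpa only [hfourth] using pow_sum_le_card_mul_sum_pow (s := s) (fun i _ => sqrt_nonneg |x i|) 3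
  refine le_of_pow_le_pow_left₀ four_ne_zero (by positivity) (hpow.trans_eq ?_)
  rw [mul_pow, ← rpow_mul_natCast (by positivity), ← rpow_mul_natCast (by positivity)]
  norm_num [sq_sqrt (sum_nonneg fun i _ => sq_nonneg (x i))]

theorem log_eight_div_le {a : ℝ} (ha : 0 < a) (ha2 : a ≤ 1 / 2) :
    log (8 / a) ≤ 4 * log (1 / a) := by
  have hlog : log 2 ≤ log (1 / a) := log_le_log two_pos (by rw [le_div_iff₀ ha]; linarith)
  rw [div_eq_mul_one_div, log_mul (by norm_num) (by positivity),
    show (8 : ℝ) = 2 ^ 3 by norm_num, log_pow]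
  push_cast
  linarith

theorem dl_joint_density_lower_general {ι : Type*} [Fintype ι] {a m : ℝ} (ha : 0 < a) (ha1 : a < 1)
    (η : ι → ℝ) (hη : √(∑ j, η j ^ 2) ≤ m) :
    -log (∏ j, dlDensity a (η j)) ≤
      Fintype.card ι * log (8 / a) +
        3 * ((Fintype.card ι : ℝ) ^ (3 / 4 : ℝ) * m ^ (1 / 2 : ℝ)) := by
  by_cases hzero : ∃ j, η j = 0
  · obtain ⟨j, hj⟩ := hzero
    have hm : 0 ≤ m := (sqrt_nonneg _).trans hη
    have hlog : 0 ≤ log (8 / a) := log_nonneg (by rw [le_div_iff₀ ha]; linarith)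
    rw [prod_eq_zero (mem_univ j) (hj ▸ dlDensity_zero ha1.ne), log_zero, neg_zero]
    positivity
  · push Not at hzero
    rw [log_prod fun j _ => (dlDensity_pos ha ha1 (hzero j)).ne', ← sum_neg_distrib]
    calc ∑ j, -log (dlDensity a (η j))
        ≤ ∑ j, (log (8 / a) + 3 * √|η j|) :=
          sum_le_sum fun j _ => neg_log_dlDensity_le ha ha1 (hzero j)
      _ = Fintype.card ι * log (8 / a) + 3 * ∑ j, √|η j| := by
          rw [sum_add_distrib, ← mul_sum, sum_const, nsmul_eq_mul, card_univ]
      _ ≤ _ := by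
          grw [sum_sqrt_abs_le, hη, card_univ]

/-- Lower bound on the joint DL density: for `a ∈ (0, 1/2)` and `η ∈ ℝ^{|S|}`
with `‖η‖₂ ≤ m` (`m` large),
`−log Π_S(η) ≤ C { |S| log(1/a) + |S|^{3/4} m^{1/2} }` for an absolute `C > 0`. -/
theorem dl_joint_density_lower :
    ∃ C > 0, ∃ m₀ > 0, ∀ a : ℝ, 0 < a → a < 1/2 →
      ∀ m : ℝ, m₀ ≤ m →
        ∀ (s : ℕ) (η : Fin s → ℝ), Real.sqrt (∑ j, (η j) ^ 2) ≤ m →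
          -Real.log (∏ j, dlDensity a (η j)) ≤
            C * (s * Real.log (1/a) + (s : ℝ) ^ ((3:ℝ)/4) * m ^ ((1:ℝ)/2)) := by
  refine ⟨4, by norm_num, 1, one_pos, fun a ha ha' m hm s η hη =>
    (dl_joint_density_lower_general ha (by linarith) η hη).trans ?_⟩
  grw [log_eight_div_le ha ha'.le, Fintype.card_fin]
  linarith [show 0 ≤ (s : ℝ) ^ (3 / 4 : ℝ) * m ^ (1 / 2 : ℝ) by positivity]
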